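/- For every integer e ≥ 1 and general points: ℓ(L(8e, 8e−4, 6^{2e})) = 0 (virtual dimension −2e − 6), ℓ(L(8e+1, 8e−3, 6^{2e})) = 2 (virtual dimension −2e − 1), and ℓ(L(8e+2, 8e−2, 6^{2e})) = 5 (virtual dimension −2e + 4); in particular all three systems are special. -/

import Mathlib

open MvPolynomial

/-- The iterated partial derivative corresponding to the multi-index `ν`. -/
noncomputable def mderiv (ν : Fin 3 → ℕ) :
    MvPolynomial (Fin 3) ℂ →ₗ[ℂ] MvPolynomial (Fin 3) ℂ :=
  ((pderiv (R := ℂ) (0 : Fin 3)).toLinearMap ^ ν 0) ∘ₗ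
  ((pderiv (R := ℂ) (1 : Fin 3)).toLinearMap ^ ν 1) ∘ₗ
  ((pderiv (R := ℂ) (2 : Fin 3)).toLinearMap ^ ν 2)

/-- The linear system `L(d; m)` of homogeneous forms of degree `d` in three variables
all of whose partial derivatives of order `< m i` vanish at the point `p i`,
i.e. plane curves of degree `d` with multiplicity at least `m i` at `p i`. -/
noncomputable def linSys {k : ℕ} (p : Fin k → Fin 3 → ℂ) (d : ℕ) (m : Fin k → ℕ) :
    Submodule ℂ (MvPolynomial (Fin 3) ℂ) :=
  (homogeneousSubmodule (Fin 3) ℂ d) ⊓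
    ⨅ (i : Fin k), ⨅ (ν : Fin 3 → ℕ), ⨅ (_ : ν 0 + ν 1 + ν 2 < m i),
      LinearMap.ker ((aeval (p i)).toLinearMap ∘ₗ mderiv ν)

/-- The projective dimension `ℓ` of the linear system (`-1` means empty). -/
noncomputable def projDim {k : ℕ} (p : Fin k → Fin 3 → ℂ) (d : ℕ) (m : Fin k → ℕ) : ℤ :=
  (Module.finrank ℂ (linSys p d m) : ℤ) - 1

/-- The virtual dimension `v = d(d+3)/2 - ∑ mᵢ(mᵢ+1)/2`. -/
def virtDim {k : ℕ} (d : ℕ) (m : Fin k → ℕ) : ℤ :=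
  ((d : ℤ) * (d + 3)) / 2 - ∑ i : Fin k, ((m i : ℤ) * (m i + 1)) / 2

/-- The quasi-homogeneous multiplicity vector `(m₀, 6, …, 6)` on `n + 1` points. -/
def qh (n m0 : ℕ) : Fin (n + 1) → ℕ := fun i => if i = 0 then m0 else 6

/-- A property `Q` of configurations of `k` points of `ℙ²` (given by nonzero homogeneous
coordinate vectors) holds for points in general position: there is a nonzero polynomial
in the coordinates such that `Q` holds whenever it does not vanish. -/
def Generically (k : ℕ) (Q : (Fin k → Fin 3 → ℂ) → Prop) : Prop :=
  ∃ P : MvPolynomial (Fin k × Fin 3) ℂ, P ≠ 0 ∧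
    ∀ p : Fin k → Fin 3 → ℂ, (∀ i, p i ≠ 0) →
      eval (fun x => p x.1 x.2) P ≠ 0 → Q p

/-!
Both bounds concern `d = (k + 2a)e + c`, `m₀ = d - k`, `m = k + a` on `2e + 1` points with `c ≤ k`;
the three families are `k = 4`, `a = 2` and `c = 0, 1, 2`.

For arbitrary points, the systems `L(2e; 2e, 1^{2e})` (the lines joining `p₀` to the other points)
and `L(e; e - 1, 1^{2e})` have virtual dimension `0`, hence contain curves `D` and `E`. Adding
`(k - c)E + aD` to the curves of `L(ce + c; ce, c^{2e})`, whose virtual dimension is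
`(c + 2).choose 2 - 1`, bounds the dimension of `L(d; m₀, m^{2e})` from below.

For the upper bound, by semicontinuity we may take `p₀ = (0 : 0 : 1)` and the other points on the
curve `z y ^ (e - 1) = x ^ e`, so that `E` is this curve. In the chart `y = 1` restriction of
`f(x, z)` to `z = x ^ e` gives a polynomial in `x` of bounded degree divisible by `H ^ m`, where `H`
is the monic polynomial of degree `2e` vanishing at the points. If it is zero, then `z - x ^ e`
divides `f`, and the quotient satisfies the same conditions with `d`, `k`, `m` replaced by `d - e`,
`k - 1`, `m - 1`. The restrictions contribute at most `(c + 1) + c + ⋯ + 1 = (c + 2).choose 2`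
dimensions in total.
-/

section PartialDerivatives

lemma pderiv_pderiv_comm {σ R : Type*} [CommRing R] (i j : σ) (F : MvPolynomial σ R) :
    pderiv i (pderiv j F) = pderiv j (pderiv i F) := by
  classical
  have hbracket : ⁅pderiv (R := R) i, pderiv (R := R) j⁆ = 0 :=
    derivation_ext fun k => by
      simp only [Derivation.commutator_apply, pderiv_X, Pi.single_apply]
      split_ifs <;> simp
  have hF := DFunLike.congr_fun hbracket F
  rw [Derivation.commutator_apply] at hF
  exact sub_eq_zero.mp hF

lemma mderiv_apply (ν : Fin 3 → ℕ) (F : MvPolynomial (Fin 3) ℂ) :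
    mderiv ν F = (pderiv 0)^[ν 0] ((pderiv 1)^[ν 1] ((pderiv 2)^[ν 2] F)) := by
  simp [mderiv, Module.End.coe_pow]

lemma mderiv_zero (F : MvPolynomial (Fin 3) ℂ) : mderiv 0 F = F := by
  simp [mderiv_apply]

lemma mderiv_add_single (ν : Fin 3 → ℕ) (i : Fin 3) (F : MvPolynomial (Fin 3) ℂ) :
    mderiv (ν + Pi.single i 1) F = mderiv ν (pderiv i F) := by
  have hcomm (a b : Fin 3) : Function.Commute (pderiv (R := ℂ) a) (pderiv (R := ℂ) b) :=
    pderiv_pderiv_comm a b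
  fin_cases i
  · simp only [mderiv_apply, Pi.add_apply, Fin.zero_eta, Pi.single_eq_same, ne_eq,
      Fin.reduceEq, not_false_eq_true, Pi.single_eq_of_ne, add_zero, Function.iterate_succ_apply]
    rw [((hcomm 2 0).iterate_left (ν 2)).eq, ((hcomm 1 0).iterate_left (ν 1)).eq]
  · simp only [mderiv_apply, Pi.add_apply, Fin.mk_one, Pi.single_eq_same, ne_eq,
      Fin.reduceEq, not_false_eq_true, Pi.single_eq_of_ne, add_zero, Function.iterate_succ_apply,
      zero_ne_one]
    rw [((hcomm 2 1).iterate_left (ν 2)).eq]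
  · simp [mderiv_apply]

lemma derivative_aeval {σ R A : Type*} [Fintype σ] [CommRing R] [CommRing A] [Algebra R A]
    (γ : σ → Polynomial A) (F : MvPolynomial σ R) :
    Polynomial.derivative (aeval γ F) =
      ∑ i, aeval γ (pderiv i F) * Polynomial.derivative (γ i) := by
  classical
  induction F using MvPolynomial.induction_on with
  | C a =>
    rw [← algebraMap_eq, AlgHom.commutes, Polynomial.algebraMap_apply]
    simp [algebraMap_eq]
  | add F G hF hG => simp only [map_add, hF, hG, add_mul, Finset.sum_add_distrib]
  | mul_X F j hF =>
    simp only [map_mul, aeval_X, Polynomial.derivative_mul, hF, pderiv_mul, pderiv_X, map_add,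
      add_mul, Finset.sum_add_distrib, Finset.sum_mul]
    refine congrArg₂ _ (Finset.sum_congr rfl fun i _ => by ring) ?_
    rw [Finset.sum_eq_single j (fun i _ hij => by simp [Pi.single_eq_of_ne' hij])
      (fun h => absurd (Finset.mem_univ j) h)]
    simp

end PartialDerivatives

/-- `F` vanishes to order at least `m` at `p`. The derivatives are taken with respect to all three
homogeneous coordinates, as in the definition of `linSys`. -/
def VanishesToOrder (p : Fin 3 → ℂ) (m : ℕ) (F : MvPolynomial (Fin 3) ℂ) : Prop :=
  ∀ ν : Fin 3 → ℕ, ν 0 + ν 1 + ν 2 < m → eval p (mderiv ν F) = 0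

namespace VanishesToOrder

variable {p : Fin 3 → ℂ} {m n : ℕ} {F G U : MvPolynomial (Fin 3) ℂ}

lemma order_zero (p : Fin 3 → ℂ) (F : MvPolynomial (Fin 3) ℂ) : VanishesToOrder p 0 F :=
  fun _ h => absurd h (Nat.not_lt_zero _)

lemma mono (h : VanishesToOrder p m F) (hnm : n ≤ m) : VanishesToOrder p n F :=
  fun ν hν => h ν (hν.trans_le hnm)

lemma succ_iff : VanishesToOrder p (m + 1) F ↔
    eval p F = 0 ∧ ∀ i, VanishesToOrder p m (pderiv i F) := by
  constructor
  · refine fun h => ⟨by simpa [mderiv_zero] using h 0 (by simp), fun i ν hν => ?_⟩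
    rw [← mderiv_add_single]
    apply h
    fin_cases i <;> simp <;> omega
  · rintro ⟨h0, h1⟩ ν hν
    by_cases hzero : ν = 0
    · rw [hzero, mderiv_zero, h0]
    obtain ⟨i, hi⟩ := Function.ne_iff.mp hzero
    obtain ⟨μ, rfl⟩ : ∃ μ, ν = μ + Pi.single i 1 := by
      refine ⟨ν - Pi.single i 1, (tsub_add_cancel_of_le fun j => ?_).symm⟩
      rcases eq_or_ne j i with rfl | hj
      · simpa [Nat.one_le_iff_ne_zero] using hi
      · simp [hj]
    rw [mderiv_add_single]
    apply h1
    fin_cases i <;> simp at hν <;> omega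

lemma one_iff : VanishesToOrder p 1 F ↔ eval p F = 0 := by
  simp [succ_iff, order_zero]

protected lemma pderiv (h : VanishesToOrder p m F) (i : Fin 3) :
    VanishesToOrder p (m - 1) (pderiv i F) := by
  cases m with
  | zero => exact order_zero _ _
  | succ m => exact (succ_iff.mp h).2 i

lemma iterate_pderiv (h : VanishesToOrder p m F) (i : Fin 3) (j : ℕ) :
    VanishesToOrder p (m - j) ((pderiv i)^[j] F) := by
  induction j with
  | zero => exact h
  | succ j ih =>
    rw [Function.iterate_succ_apply', ← Nat.sub_sub]
    exact ih.pderiv i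

lemma add (hF : VanishesToOrder p m F) (hG : VanishesToOrder p m G) :
    VanishesToOrder p m (F + G) := fun ν hν => by
  rw [map_add, map_add, hF ν hν, hG ν hν, add_zero]

lemma sub (hF : VanishesToOrder p m F) (hG : VanishesToOrder p m G) :
    VanishesToOrder p m (F - G) := fun ν hν => by
  rw [map_sub, map_sub, hF ν hν, hG ν hν, sub_zero]

lemma mul (hF : VanishesToOrder p m F) (hG : VanishesToOrder p n G) :
    VanishesToOrder p (m + n) (F * G) := by
  induction hk : m + n generalizing m n F G with
  | zero => exact order_zero _ _
  | succ k ih =>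
    rw [succ_iff, map_mul]
    refine ⟨?_, fun i => ?_⟩
    · rcases m.eq_zero_or_pos with rfl | hm
      · rw [one_iff.mp (hG.mono (by omega)), mul_zero]
      · rw [one_iff.mp (hF.mono hm), zero_mul]
    · rw [pderiv_mul]
      refine add ?_ ?_
      · rcases m.eq_zero_or_pos with rfl | hm
        · exact ih (order_zero p _) (hG.mono (Nat.sub_le n 1)) (by omega)
        · exact ih (hF.pderiv i) hG (by omega)
      · rcases n.eq_zero_or_pos with rfl | hn
        · exact ih (hF.mono (Nat.sub_le m 1)) (order_zero p _) (by omega)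
        · exact ih hF (hG.pderiv i) (by omega)

lemma mul_left (U : MvPolynomial (Fin 3) ℂ) (hF : VanishesToOrder p m F) :
    VanishesToOrder p m (U * F) := by
  simpa using (order_zero p U).mul hF

lemma pow (hF : VanishesToOrder p m F) (k : ℕ) : VanishesToOrder p (k * m) (F ^ k) := by
  induction k with
  | zero => simpa using order_zero _ _
  | succ k ih => simpa [pow_succ, add_mul] using ih.mul hF

lemma of_mul_left (hU : eval p U ≠ 0) (h : VanishesToOrder p m (U * F)) :
    VanishesToOrder p m F := by
  induction m generalizing F with
  | zero => exact order_zero _ _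
  | succ m ih =>
    obtain ⟨h0, h1⟩ := succ_iff.mp h
    have hF : VanishesToOrder p m F := ih (h.mono m.le_succ)
    rw [map_mul] at h0
    refine succ_iff.mpr ⟨(mul_eq_zero.mp h0).resolve_left hU, fun i => ih ?_⟩
    have hi := (h1 i).sub (hF.mul_left (pderiv i U))
    rwa [pderiv_mul, add_sub_cancel_left] at hi

end VanishesToOrder

section LinearSystems

variable {k d d' : ℕ} {p : Fin k → Fin 3 → ℂ} {m m' : Fin k → ℕ} {F G : MvPolynomial (Fin 3) ℂ}

lemma mem_linSys :
    F ∈ linSys p d m ↔ F.IsHomogeneous d ∧ ∀ i, VanishesToOrder (p i) (m i) F := by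
  simp [linSys, VanishesToOrder, Submodule.mem_iInf, aeval_eq_eval]

lemma mul_mem_linSys (hF : F ∈ linSys p d m) (hG : G ∈ linSys p d' m') :
    F * G ∈ linSys p (d + d') (m + m') := by
  rw [mem_linSys] at *
  exact ⟨hF.1.mul hG.1, fun i => (hF.2 i).mul (hG.2 i)⟩

lemma pow_mem_linSys (hF : F ∈ linSys p d m) (a : ℕ) : F ^ a ∈ linSys p (a * d) (a • m) := by
  rw [mem_linSys] at *
  exact ⟨mul_comm d a ▸ hF.1.pow a, fun i => (hF.2 i).pow a⟩

instance finite_homogeneousSubmodule (σ R : Type*) [Finite σ] [CommSemiring R] (d : ℕ) :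
    Module.Finite R (homogeneousSubmodule σ R d) :=
  Module.Finite.iff_fg.mpr (homogeneousSubmodule_fg σ R d)

instance finite_linSys (p : Fin k → Fin 3 → ℂ) (d : ℕ) (m : Fin k → ℕ) :
    Module.Finite ℂ (linSys p d m) :=
  Submodule.finiteDimensional_of_le (inf_le_left : _ ≤ homogeneousSubmodule (Fin 3) ℂ d)

lemma projDim_le_of_mul_mem (hG : G ∈ linSys p d' m') (hG0 : G ≠ 0) :
    projDim p d m ≤ projDim p (d' + d) (m' + m) := by
  have hmap : (linSys p d m).map (LinearMap.mulLeft ℂ G) ≤ linSys p (d' + d) (m' + m) := by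
    rintro _ ⟨F, hF, rfl⟩
    exact mul_mem_linSys hG hF
  have hinj : Function.Injective (LinearMap.mulLeft ℂ G) := mul_right_injective₀ hG0
  have hrank := Submodule.finrank_mono hmap
  rw [← (Submodule.equivMapOfInjective _ hinj _).finrank_eq] at hrank
  exact sub_le_sub_right (Nat.cast_le.mpr hrank) 1

lemma exists_mem_linSys_ne_zero (h : 0 ≤ projDim p d m) : ∃ F ∈ linSys p d m, F ≠ 0 := by
  refine Submodule.exists_mem_ne_zero_of_ne_bot fun hbot => ?_
  rw [projDim, hbot, finrank_bot] at h
  omega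

end LinearSystems

/-- The multiplicity vector `(m₀, m, …, m)` on `n + 1` points. -/
def quasiHom (n m₀ m : ℕ) : Fin (n + 1) → ℕ := Fin.cons m₀ fun _ => m

section QuasiHom

variable (n m₀ m₀' m m' : ℕ)

@[simp] lemma quasiHom_zero : quasiHom n m₀ m 0 = m₀ := rfl

@[simp] lemma quasiHom_succ (i : Fin n) : quasiHom n m₀ m i.succ = m := rfl

lemma quasiHom_add : quasiHom n m₀ m + quasiHom n m₀' m' = quasiHom n (m₀ + m₀') (m + m') :=
  funext <| Fin.cases rfl fun _ => rfl

lemma smul_quasiHom (a : ℕ) : a • quasiHom n m₀ m = quasiHom n (a * m₀) (a * m) :=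
  funext <| Fin.cases rfl fun _ => rfl

lemma qh_eq_quasiHom : qh n m₀ = quasiHom n m₀ 6 :=
  funext <| Fin.cases rfl fun _ => rfl

end QuasiHom

section VirtualDimension

lemma finrank_homogeneousSubmodule (σ R : Type*) [Fintype σ] [CommRing R] [Nontrivial R] (d : ℕ) :
    Module.finrank R (homogeneousSubmodule σ R d) = (Fintype.card σ + d - 1).choose d := by
  classical
  have hset : ((Finset.univ.finsuppAntidiag d : Finset (σ →₀ ℕ)) : Set (σ →₀ ℕ)) =
      {s | s.degree = d} := by
    ext s
    simp [Finsupp.degree_eq_sum]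
  rw [homogeneousSubmodule_eq_finsupp_supported, ← hset,
    (AddMonoidAlgebra.supportedEquivFinsupp _).finrank_eq, Module.finrank_finsupp_self]
  simp [Finset.card_finsuppAntidiag_nat_eq_choose]

lemma intCast_choose_two (n : ℕ) : ((n + 1).choose 2 : ℤ) = n * (n + 1) / 2 := by
  rw [Nat.choose_two_right, Nat.add_sub_cancel, mul_comm]
  push_cast
  rfl

lemma virtDim_eq_choose {k : ℕ} (d : ℕ) (m : Fin k → ℕ) :
    virtDim d m = (d + 2).choose 2 - 1 - ∑ i, ((m i + 1).choose 2 : ℤ) := by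
  have hd : (d * (d + 3) / 2 : ℤ) = (d + 2).choose 2 - 1 := by
    rw [intCast_choose_two (d + 1)]
    push_cast
    rw [show ((d + 1) * (d + 1 + 1) : ℤ) = d * (d + 3) + 1 * 2 by ring,
      Int.add_mul_ediv_right _ _ two_ne_zero, add_sub_cancel_right]
  simp only [virtDim, hd, intCast_choose_two]

lemma virtDim_quasiHom (n d m₀ m : ℕ) :
    virtDim d (quasiHom n m₀ m) =
      (d + 2).choose 2 - 1 - ((m₀ + 1).choose 2 + n * (m + 1).choose 2) := by
  simp [virtDim_eq_choose, Fin.sum_univ_succ]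

lemma finrank_le_finrank_ker_add_card {K V κ : Type*} [DivisionRing K] [AddCommGroup V]
    [Module K V] [Module.Finite K V] [Fintype κ] (f : V →ₗ[K] κ → K) :
    Module.finrank K V ≤ Module.finrank K (LinearMap.ker f) + Fintype.card κ := by
  rw [← f.finrank_range_add_finrank_ker, add_comm, ← Module.finrank_fintype_fun_eq_card K]
  exact Nat.add_le_add_left (Submodule.finrank_le _) _

lemma sum_fin_three_add {M : Type*} [AddCommMonoid M] (f : Fin 3 → M) (j : Fin 3) :
    ∑ i, f i = f j + f (j + 1) + f (j + 2) := by
  rw [← Equiv.sum_comp (Equiv.addLeft j), Fin.sum_univ_three]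
  simp

/-- By Euler's identity, `X j * ∂F/∂X j` lies in the span of `F` and of the `X i * ∂F/∂X i` for
`i ≠ j`. -/
lemma VanishesToOrder.of_isHomogeneous {q : Fin 3 → ℂ} {j : Fin 3} (hq : q j ≠ 0) {m d : ℕ}
    {F : MvPolynomial (Fin 3) ℂ} (hF : F.IsHomogeneous d)
    (h : ∀ a b, a + b < m → eval q ((pderiv (j + 1))^[a] ((pderiv (j + 2))^[b] F)) = 0) :
    VanishesToOrder q m F := by
  induction m generalizing d F with
  | zero => exact order_zero _ _
  | succ m ih =>
    have hcomm : Function.Commute (pderiv (R := ℂ) (j + 1)) (pderiv (j + 2)) :=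
      pderiv_pderiv_comm _ _
    have hF0 : VanishesToOrder q m F := ih hF fun a b hab => h a b (by omega)
    have hF1 : VanishesToOrder q m (pderiv (j + 1) F) := ih hF.pderiv fun a b hab => by
      rw [← (hcomm.iterate_right b).eq, ← Function.iterate_succ_apply]
      exact h (a + 1) b (by omega)
    have hF2 : VanishesToOrder q m (pderiv (j + 2) F) := ih hF.pderiv fun a b hab => by
      rw [← Function.iterate_succ_apply]
      exact h a (b + 1) (by omega)
    have heuler : X j * pderiv j F =
        (d : MvPolynomial (Fin 3) ℂ) * F - X (j + 2) * pderiv (j + 2) F -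
          X (j + 1) * pderiv (j + 1) F := by
      rw [← nsmul_eq_mul, ← hF.sum_X_mul_pderiv, sum_fin_three_add _ j]
      ring
    have hFj : VanishesToOrder q m (pderiv j F) := by
      refine of_mul_left (U := X j) (by simpa using hq) ?_
      rw [heuler]
      exact ((hF0.mul_left _).sub (hF2.mul_left _)).sub (hF1.mul_left _)
    refine succ_iff.mpr ⟨h 0 0 m.succ_pos, fun i => ?_⟩
    have hij : ∀ i j : Fin 3, i = j ∨ i = j + 1 ∨ i = j + 2 := by decide
    obtain rfl | rfl | rfl := hij i j
    exacts [hFj, hF1, hF2]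

lemma sum_range_succ_eq_choose_two (n : ℕ) : ∑ j ∈ Finset.range n, (j + 1) = (n + 1).choose 2 := by
  rw [Nat.choose_two_right, ← Finset.sum_range_id, Finset.sum_range_succ', add_zero]

lemma sum_card_antidiagonal (m : ℕ) :
    ∑ n : Fin m, (Finset.HasAntidiagonal.antidiagonal (n : ℕ)).card = (m + 1).choose 2 := by
  simp only [Finset.Nat.card_antidiagonal]
  rw [Fin.sum_univ_eq_sum_range (fun n => n + 1), sum_range_succ_eq_choose_two]

theorem virtDim_le_projDim {k : ℕ} {p : Fin k → Fin 3 → ℂ} (hp : ∀ i, p i ≠ 0) (d : ℕ)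
    (m : Fin k → ℕ) : virtDim d m ≤ projDim p d m := by
  choose j hj using fun i => Function.ne_iff.mp (hp i)
  let conditions : homogeneousSubmodule (Fin 3) ℂ d →ₗ[ℂ]
      (Σ i, Σ n : Fin (m i), Finset.HasAntidiagonal.antidiagonal (n : ℕ)) → ℂ :=
    LinearMap.pi fun x => (aeval (p x.1)).toLinearMap ∘ₗ
      ((pderiv (R := ℂ) (j x.1 + 1)).toLinearMap ^ x.2.2.1.1) ∘ₗ
      ((pderiv (R := ℂ) (j x.1 + 2)).toLinearMap ^ x.2.2.1.2) ∘ₗ Submodule.subtype _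
  have hker : (LinearMap.ker conditions).map (Submodule.subtype _) ≤ linSys p d m := by
    rintro _ ⟨F, hF, rfl⟩
    refine mem_linSys.mpr ⟨F.2, fun i => .of_isHomogeneous (hj i) F.2 fun a b hab => ?_⟩
    have hab' := congrFun hF
      ⟨i, ⟨a + b, hab⟩, (a, b), Finset.HasAntidiagonal.mem_antidiagonal.mpr rfl⟩
    simpa [conditions, Module.End.coe_pow, aeval_eq_eval] using hab'
  have hrank := Submodule.finrank_mono hker
  rw [Submodule.finrank_map_subtype_eq] at hrank
  have hcount := finrank_le_finrank_ker_add_card conditions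
  simp only [finrank_homogeneousSubmodule, Fintype.card_fin, Fintype.card_sigma, Fintype.card_coe,
    sum_card_antidiagonal] at hcount
  rw [show 3 + d - 1 = d + 2 by omega, Nat.choose_symm_add] at hcount
  rw [virtDim_eq_choose, projDim, ← Nat.cast_sum]
  omega

end VirtualDimension

section SpecialFamily

variable {e a k c d m₀ : ℕ}

lemma virtDim_quasiHom_two_mul (hc : c ≤ k) (hd : d = (k + 2 * a) * e + c) (hm₀ : m₀ + k = d) :
    virtDim d (quasiHom (2 * e) m₀ (k + a)) =
      (c + 2).choose 2 - 1 - (k - c).choose 2 - 2 * e * a.choose 2 := by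
  obtain ⟨b, rfl⟩ := Nat.exists_eq_add_of_le hc
  have hm₀' : (m₀ : ℚ) = (c + b + 2 * a) * e - b := by
    have := congrArg (Nat.cast (R := ℚ)) (hm₀.trans hd)
    push_cast at this
    linear_combination this
  rw [virtDim_quasiHom, hd, Nat.add_sub_cancel_left]
  qify
  simp only [Nat.cast_choose_two, Nat.cast_add, Nat.cast_mul, Nat.cast_ofNat, Nat.cast_one, hm₀']
  ring

lemma choose_sub_one_le_projDim_quasiHom (he : 1 ≤ e) (hc : c ≤ k)
    (hd : d = (k + 2 * a) * e + c) (hm₀ : m₀ + k = d) {p : Fin (2 * e + 1) → Fin 3 → ℂ}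
    (hp : ∀ i, p i ≠ 0) :
    ((c + 2).choose 2 - 1 : ℤ) ≤ projDim p d (quasiHom (2 * e) m₀ (k + a)) := by
  obtain ⟨b, rfl⟩ := Nat.exists_eq_add_of_le hc
  obtain ⟨n, rfl⟩ := Nat.exists_eq_add_of_le' he
  have hDdim : virtDim (2 * (n + 1)) (quasiHom (2 * (n + 1)) (2 * (n + 1)) 1) = 0 :=
    virtDim_quasiHom_two_mul (k := 0) (a := 1) (c := 0) le_rfl (by ring) rfl
  have hEdim : virtDim (n + 1) (quasiHom (2 * (n + 1)) n 1) = 0 :=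
    virtDim_quasiHom_two_mul (k := 1) (a := 0) (c := 0) zero_le_one (by ring) rfl
  have hLdim : virtDim (c * (n + 1) + c) (quasiHom (2 * (n + 1)) (c * (n + 1)) c) =
      (c + 2).choose 2 - 1 := by
    simpa using virtDim_quasiHom_two_mul (e := n + 1) (a := 0) (le_refl c) rfl (by ring)
  obtain ⟨D, hD, hD0⟩ := exists_mem_linSys_ne_zero (hDdim.ge.trans (virtDim_le_projDim hp _ _))
  obtain ⟨E, hE, hE0⟩ := exists_mem_linSys_ne_zero (hEdim.ge.trans (virtDim_le_projDim hp _ _))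
  have hG := mul_mem_linSys (pow_mem_linSys hE b) (pow_mem_linSys hD a)
  refine (hLdim.ge.trans (virtDim_le_projDim hp _ _)).trans
    ((projDim_le_of_mul_mem hG (mul_ne_zero (pow_ne_zero _ hE0) (pow_ne_zero _ hD0))).trans_eq ?_)
  simp only [smul_quasiHom, quasiHom_add]
  congr 2
  · rw [hd]
    ring
  · linarith
  · ring

end SpecialFamily

section Semicontinuity

lemma exists_linearIndependent_col_submatrix {K m n : Type*} [Field K] [Fintype n]
    (A : Matrix m n K) {r : ℕ} (hr : A.rank = r) :
    ∃ c : Fin r → n, LinearIndependent K (A.submatrix id c).col := by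
  obtain ⟨κ, c, hinj, hspan, hli⟩ := exists_linearIndependent' K A.col
  have := Finite.of_injective c hinj
  have := Fintype.ofFinite κ
  have hcard : Fintype.card κ = r := by
    rw [← hr, A.rank_eq_finrank_span_cols, ← hspan, finrank_span_eq_card hli]
  let f : Fin r ≃ κ := (Fintype.equivFinOfCardEq hcard).symm
  exact ⟨c ∘ f, hli.comp f f.injective⟩

lemma exists_det_submatrix_ne_zero {K m n : Type*} [Field K] [Finite m] [Fintype n]
    (A : Matrix m n K) :
    ∃ (r : Fin A.rank → m) (c : Fin A.rank → n), (A.submatrix r c).det ≠ 0 := by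
  have := Fintype.ofFinite m
  obtain ⟨c, hc⟩ := exists_linearIndependent_col_submatrix A rfl
  have hrank : (A.submatrix id c).transpose.rank = A.rank := by
    simpa using LinearIndependent.rank_matrix (M := (A.submatrix id c).transpose) hc
  obtain ⟨r, hr⟩ := exists_linearIndependent_col_submatrix _ hrank
  rw [Matrix.linearIndependent_cols_iff_isUnit, Matrix.isUnit_iff_isUnit_det] at hr
  exact ⟨r, c, by simpa [← Matrix.det_transpose (A.submatrix r c)] using hr.ne_zero⟩

lemma exists_forall_rank_map_eval_le {σ K m n : Type*} [Field K] [Finite m] [Fintype n]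
    (A : Matrix m n (MvPolynomial σ K)) (q₀ : σ → K) :
    ∃ P : MvPolynomial σ K, P ≠ 0 ∧
      ∀ q, eval q P ≠ 0 → (A.map (eval q₀)).rank ≤ (A.map (eval q)).rank := by
  obtain ⟨r, c, hrc⟩ := exists_det_submatrix_ne_zero (A.map (eval q₀))
  have heval (q : σ → K) : eval q (A.submatrix r c).det = ((A.map (eval q)).submatrix r c).det :=
    RingHom.map_det _ _
  refine ⟨(A.submatrix r c).det, fun h => hrc ?_, fun q hq => ?_⟩
  · rw [← heval, h, map_zero]
  · rw [heval] at hq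
    simpa [Matrix.rank_of_det_ne_zero hq] using (A.map (eval q)).rank_submatrix_le r c

/-- The matrix, with polynomial entries in the coordinates of `k` points, whose kernel at a given
configuration `p` is `linSys p d m` written in a basis of the forms of degree `d`. -/
noncomputable def linSysMatrix {k : ℕ} (d : ℕ) (m : Fin k → ℕ) :
    Matrix (Σ i, {ν : Fin 3 → ℕ // ν 0 + ν 1 + ν 2 < m i})
      (Fin (Module.finrank ℂ (homogeneousSubmodule (Fin 3) ℂ d)))
      (MvPolynomial (Fin k × Fin 3) ℂ) :=
  Matrix.of fun x b => rename (Prod.mk x.1)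
    (mderiv x.2 (Module.finBasis ℂ (homogeneousSubmodule (Fin 3) ℂ d) b))

lemma rank_linSysMatrix_add_finrank_linSys {k : ℕ} (p : Fin k → Fin 3 → ℂ) (d : ℕ)
    (m : Fin k → ℕ) :
    ((linSysMatrix d m).map (eval fun x => p x.1 x.2)).rank + Module.finrank ℂ (linSys p d m) =
      Module.finrank ℂ (homogeneousSubmodule (Fin 3) ℂ d) := by
  let B := Module.finBasis ℂ (homogeneousSubmodule (Fin 3) ℂ d)
  let conditions : homogeneousSubmodule (Fin 3) ℂ d →ₗ[ℂ]
      (Σ i, {ν : Fin 3 → ℕ // ν 0 + ν 1 + ν 2 < m i}) → ℂ :=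
    LinearMap.pi fun x => (aeval (p x.1)).toLinearMap ∘ₗ mderiv x.2 ∘ₗ Submodule.subtype _
  have hmatrix : ((linSysMatrix d m).map (eval fun x => p x.1 x.2)).mulVecLin =
      conditions ∘ₗ B.equivFun.symm.toLinearMap := by
    refine LinearMap.pi_ext' fun b => LinearMap.ext_ring (funext fun x => ?_)
    have hb : B.equivFun.symm (Pi.single b 1) = B b := by simp [Pi.single_apply]
    simp [-Module.Basis.equivFun_symm_apply, hb, linSysMatrix, conditions, eval_rename,
      aeval_eq_eval, B, Function.comp_def]
  have hker : (LinearMap.ker conditions).map (Submodule.subtype _) = linSys p d m := by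
    ext F
    simp [mem_linSys, VanishesToOrder, conditions, _root_.funext_iff, aeval_eq_eval,
      Sigma.forall, and_comm]
  rw [Matrix.rank, hmatrix, LinearEquiv.range_comp, ← hker, Submodule.finrank_map_subtype_eq,
    conditions.finrank_range_add_finrank_ker]

namespace Generically

variable {k : ℕ} {Q R : (Fin k → Fin 3 → ℂ) → Prop}

lemma mono (hQ : Generically k Q) (h : ∀ p, (∀ i, p i ≠ 0) → Q p → R p) : Generically k R := by
  obtain ⟨P, hP, hPQ⟩ := hQ
  exact ⟨P, hP, fun p hp hPp => h p hp (hPQ p hp hPp)⟩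

lemma and (hQ : Generically k Q) (hR : Generically k R) : Generically k fun p => Q p ∧ R p := by
  obtain ⟨P, hP, hPQ⟩ := hQ
  obtain ⟨P', hP', hPR⟩ := hR
  refine ⟨P * P', mul_ne_zero hP hP', fun p hp hPp => ?_⟩
  rw [map_mul, mul_ne_zero_iff] at hPp
  exact ⟨hPQ p hp hPp.1, hPR p hp hPp.2⟩

end Generically

theorem generically_projDim_le {k : ℕ} (p₀ : Fin k → Fin 3 → ℂ) (d : ℕ) (m : Fin k → ℕ) :
    Generically k fun p => projDim p d m ≤ projDim p₀ d m := by
  have (i : Fin k) : Finite {ν : Fin 3 → ℕ // ν 0 + ν 1 + ν 2 < m i} :=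
    Set.Finite.subset (Set.finite_Iic fun _ => m i) fun ν (hν : ν 0 + ν 1 + ν 2 < m i) j => by
      fin_cases j <;> simp <;> omega
  obtain ⟨P, hP, hrank⟩ :=
    exists_forall_rank_map_eval_le (linSysMatrix d m) fun x => p₀ x.1 x.2
  refine ⟨P, hP, fun p _ hPp => ?_⟩
  have hle := hrank _ hPp
  have hp := rank_linSysMatrix_add_finrank_linSys p d m
  have hp₀ := rank_linSysMatrix_add_finrank_linSys p₀ d m
  unfold projDim
  omega

end Semicontinuity

section AffineSystem

open scoped Polynomial

variable {K : Type*} [Field K] {e d n m : ℕ} {H : K[X]}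

/-- The affine form of the linear systems through points of the curve `z = x ^ e`: the polynomials
`f(x, z)` of degree less than `n` in `z` and total degree at most `d` such that `H(x) ^ (m - j)`
divides the coefficient of `w ^ j` in `f(x, w + x ^ e)`. If `H` has simple roots, the last condition
says that `f` has multiplicity at least `m` at the points `(t, t ^ e)` with `H(t) = 0`. -/
noncomputable def affineSystem (e d n m : ℕ) (H : K[X]) : Submodule K K[X][X] where
  carrier := {f | (∀ j, n ≤ j → f.coeff j = 0) ∧ (∀ j i, d < i + j → (f.coeff j).coeff i = 0) ∧
    ∀ j, H ^ (m - j) ∣ (Polynomial.taylor (Polynomial.X ^ e) f).coeff j}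
  add_mem' := by
    rintro f g ⟨hn, hd, hm⟩ ⟨hn', hd', hm'⟩
    refine ⟨fun j hj => by simp [hn j hj, hn' j hj],
      fun j i hij => by simp [hd j i hij, hd' j i hij], fun j => ?_⟩
    rw [map_add, Polynomial.coeff_add]
    exact dvd_add (hm j) (hm' j)
  zero_mem' := by simp
  smul_mem' := by
    rintro c f ⟨hn, hd, hm⟩
    refine ⟨fun j hj => by simp [hn j hj], fun j i hij => by simp [hd j i hij], fun j => ?_⟩
    rw [← algebraMap_smul K[X] c f, map_smul, Polynomial.coeff_smul]
    exact (hm j).mul_left _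

lemma affineSystem_zero (e d m : ℕ) (H : K[X]) : affineSystem e d 0 m H = ⊥ := by
  rw [eq_bot_iff]
  rintro f ⟨hn, -, -⟩
  exact Polynomial.ext fun j => hn j (Nat.zero_le j)

lemma natDegree_eval_X_pow_le {f : K[X][X]} (hf : f ∈ affineSystem e d (n + 1) m H) :
    (f.eval (Polynomial.X ^ e)).natDegree ≤ d + (e - 1) * n := by
  obtain ⟨hn, hd, -⟩ := hf
  have hdeg : f.natDegree < n + 1 :=
    Nat.lt_succ_iff.mpr (Polynomial.natDegree_le_iff_coeff_eq_zero.mpr hn)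
  rw [Polynomial.natDegree_le_iff_coeff_eq_zero]
  intro i hi
  rw [Polynomial.eval_eq_sum_range' hdeg, Polynomial.finsetSum_coeff]
  refine Finset.sum_eq_zero fun j hj => ?_
  rw [← pow_mul, Polynomial.coeff_mul_X_pow']
  split_ifs with hji
  · apply hd
    have hej : e * j ≤ (e - 1) * n + j := calc
      e * j ≤ (e - 1 + 1) * j := Nat.mul_le_mul_right j (by omega)
      _ = (e - 1) * j + j := add_one_mul _ _
      _ ≤ (e - 1) * n + j := by gcongr; exact Nat.lt_succ_iff.mp (Finset.mem_range.mp hj)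
    omega
  · rfl

lemma mem_affineSystem_of_mul_mem {g : K[X][X]} (he : 1 ≤ e)
    (h : (Polynomial.X - Polynomial.C (Polynomial.X ^ e)) * g ∈ affineSystem e d (n + 1) m H) :
    g ∈ affineSystem e (d - e) n (m - 1) H := by
  obtain ⟨hn, hd, hm⟩ := h
  have hcoeff_zero : ((Polynomial.X - Polynomial.C (Polynomial.X ^ e)) * g).coeff 0 =
      -(g.coeff 0 * Polynomial.X ^ e) := by
    rw [sub_mul, Polynomial.coeff_sub, Polynomial.coeff_X_mul_zero, Polynomial.coeff_C_mul,
      zero_sub, mul_comm]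
  have hcoeff_succ (j : ℕ) : ((Polynomial.X - Polynomial.C (Polynomial.X ^ e)) * g).coeff (j + 1) =
      g.coeff j - g.coeff (j + 1) * Polynomial.X ^ e := by
    rw [sub_mul, Polynomial.coeff_sub, Polynomial.coeff_X_mul, Polynomial.coeff_C_mul, mul_comm]
  refine ⟨?_, fun j => ?_, fun j => ?_⟩
  · rw [← Polynomial.degree_lt_iff_coeff_zero, Polynomial.degree_mul, Polynomial.degree_X_sub_C]
      at hn
    rw [← Polynomial.degree_lt_iff_coeff_zero]
    rw [Nat.cast_add_one, add_comm, WithBot.add_lt_add_iff_right WithBot.one_ne_bot] at hn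
    exact hn
  · induction j with
    | zero =>
      intro i hi
      have := hd 0 (i + e) (by omega)
      rwa [hcoeff_zero, Polynomial.coeff_neg, Polynomial.coeff_mul_X_pow, neg_eq_zero] at this
    | succ j ih =>
      intro i hi
      have := hd (j + 1) (i + e) (by omega)
      rw [hcoeff_succ, Polynomial.coeff_sub, Polynomial.coeff_mul_X_pow, ih (i + e) (by omega)]
        at this
      simpa using this
  · have := hm (j + 1)
    rw [Polynomial.taylor_mul] at this
    simp only [map_sub, Polynomial.taylor_X, Polynomial.taylor_C, add_sub_cancel_right,
      Polynomial.coeff_X_mul] at this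
    rwa [Nat.sub_sub, Nat.add_comm 1 j]

lemma rank_le_of_forall_dvd {W : Submodule K K[X]} {P : K[X]} {N : ℕ} (hP : P ≠ 0)
    (hW : ∀ f ∈ W, P ∣ f ∧ f.natDegree ≤ N) :
    Module.rank K W ≤ (N + 1 - P.natDegree : ℕ) := by
  have hle : W ≤ (Polynomial.degreeLT K (N + 1 - P.natDegree)).map (LinearMap.mulLeft K P) := by
    intro f hf
    obtain ⟨⟨q, rfl⟩, hdeg⟩ := hW f hf
    refine ⟨q, ?_, rfl⟩
    rcases eq_or_ne q 0 with rfl | hq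
    · exact zero_mem _
    rw [Polynomial.natDegree_mul hP hq] at hdeg
    exact Polynomial.mem_degreeLT.mpr ((Polynomial.natDegree_lt_iff_degree_lt hq).mp (by omega))
  calc Module.rank K W ≤ Module.rank K (Polynomial.degreeLT K (N + 1 - P.natDegree)) :=
        (Submodule.rank_mono hle).trans (rank_map_le _ _)
    _ = (N + 1 - P.natDegree : ℕ) := by
        rw [(Polynomial.degreeLTEquiv K _).rank_eq, rank_fin_fun]

lemma rank_affineSystem_succ_le (e d n m : ℕ) (he : 1 ≤ e) (hH : H ≠ 0) :
    Module.rank K (affineSystem e d (n + 1) m H) ≤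
      (d + (e - 1) * n + 1 - m * H.natDegree : ℕ) +
        Module.rank K (affineSystem e (d - e) n (m - 1) H) := by
  set W := affineSystem e d (n + 1) m H
  let restrict : K[X][X] →ₗ[K] K[X] :=
    (Polynomial.leval (Polynomial.X ^ e)).restrictScalars K
  rw [← LinearMap.rank_range_add_rank_ker (M := W) (restrict.domRestrict W)]
  refine add_le_add ?_ ?_
  · rw [← Polynomial.natDegree_pow]
    refine rank_le_of_forall_dvd (pow_ne_zero m hH) ?_
    rintro _ ⟨⟨f, hf⟩, rfl⟩
    refine ⟨?_, natDegree_eval_X_pow_le hf⟩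
    simpa [restrict, Polynomial.taylor_coeff_zero] using hf.2.2 0
  · refine (Submodule.equivMapOfInjective W.subtype W.injective_subtype _).rank_eq.trans_le ?_
    refine (Submodule.rank_mono ?_).trans (rank_map_le (LinearMap.mulLeft K
      (Polynomial.X - Polynomial.C (Polynomial.X ^ e) : K[X][X])) _)
    rintro _ ⟨⟨f, hf⟩, hroot, rfl⟩
    obtain ⟨g, rfl⟩ := Polynomial.dvd_iff_isRoot.mpr hroot
    exact ⟨g, mem_affineSystem_of_mul_mem he hf, rfl⟩

lemma rank_affineSystem_le (e d n m : ℕ) (he : 1 ≤ e) (hH : H ≠ 0) :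
    Module.rank K (affineSystem e d n m H) ≤
      (∑ j ∈ Finset.range n,
        (d - j * e + (e - 1) * (n - (j + 1)) + 1 - (m - j) * H.natDegree) : ℕ) := by
  induction n generalizing d m with
  | zero => simp [affineSystem_zero]
  | succ n ih =>
    refine (rank_affineSystem_succ_le e d n m he hH).trans ?_
    rw [Finset.sum_range_succ', add_comm, Nat.cast_add]
    refine add_le_add ((ih (d - e) (m - 1)).trans_eq ?_) (by simp)
    simp only [Nat.sub_sub, Nat.add_sub_add_right, add_one_mul, add_comm e, add_comm 1]

lemma sum_range_add_one_sub {c k : ℕ} (hc : c ≤ k) :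
    ∑ j ∈ Finset.range (k + 1), (c + 1 - j) = (c + 2).choose 2 := by
  rw [Finset.eventually_constant_sum (N := c + 1) (fun j hj => Nat.sub_eq_zero_of_le hj) (by omega),
    ← Finset.sum_range_reflect]
  calc ∑ j ∈ Finset.range (c + 1), (c + 1 - (c + 1 - 1 - j))
      = ∑ j ∈ Finset.range (c + 1), (j + 1) :=
        Finset.sum_congr rfl fun j hj => by have := Finset.mem_range.mp hj; omega
    _ = (c + 2).choose 2 := sum_range_succ_eq_choose_two (c + 1)

lemma rank_affineSystem_le_choose {a k c : ℕ} (he : 1 ≤ e) (hc : c ≤ k)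
    (hd : d = (k + 2 * a) * e + c) (hH : H ≠ 0) (hdeg : H.natDegree = 2 * e) :
    Module.rank K (affineSystem e d (k + 1) (k + a) H) ≤ ((c + 2).choose 2 : ℕ) := by
  refine (rank_affineSystem_le e d (k + 1) (k + a) he hH).trans_eq ?_
  rw [← sum_range_add_one_sub hc, ← Finset.sum_range_reflect]
  congr 1
  refine Finset.sum_congr rfl fun j hj => ?_
  obtain ⟨b, rfl⟩ := Nat.exists_eq_add_of_le (Nat.lt_succ_iff.mp (Finset.mem_range.mp hj))
  obtain ⟨e, rfl⟩ := Nat.exists_eq_add_of_le' he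
  have hterm : d - b * (e + 1) = (j + 2 * a) * (e + 1) + c := by
    rw [hd, Nat.sub_eq_iff_eq_add (by nlinarith)]
    ring
  rw [hdeg]
  simp only [Nat.add_sub_cancel, Nat.add_sub_cancel_left, hterm]
  rw [show j + b + a - b = j + a by omega, show j + b + 1 - (b + 1) = j by omega,
    ← Nat.add_sub_add_left ((2 * j + 2 * a) * e + j + 2 * a) (c + 1) j]
  congr 1 <;> ring

end AffineSystem

section Dehomogenization

open scoped Polynomial

variable {F : MvPolynomial (Fin 3) ℂ} {d m : ℕ}

lemma X_sub_C_pow_succ_dvd_of_derivative {K : Type*} [Field K] [CharZero K] {f : K[X]} {t : K}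
    {m : ℕ} (h0 : f.IsRoot t) (h : (Polynomial.X - Polynomial.C t) ^ m ∣ Polynomial.derivative f) :
    (Polynomial.X - Polynomial.C t) ^ (m + 1) ∣ f := by
  rcases eq_or_ne f 0 with rfl | hf
  · exact dvd_zero _
  by_cases hd : Polynomial.derivative f = 0
  · obtain ⟨c, rfl⟩ := Polynomial.natDegree_eq_zero.mp (Polynomial.derivative_eq_zero.mp hd)
    exact absurd (by simpa using h0) hf
  · rw [← Polynomial.le_rootMultiplicity_iff hd,
      Polynomial.derivative_rootMultiplicity_of_root h0] at h
    have hpos : 0 < f.rootMultiplicity t := (Polynomial.rootMultiplicity_pos hf).mpr h0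
    rw [← Polynomial.le_rootMultiplicity_iff hf]
    omega

lemma VanishesToOrder.X_sub_C_pow_dvd_aeval {γ : Fin 3 → ℂ[X]} {t : ℂ}
    (hF : VanishesToOrder (fun i => (γ i).eval t) m F) :
    (Polynomial.X - Polynomial.C t) ^ m ∣ aeval γ F := by
  induction m generalizing F with
  | zero => simp
  | succ m ih =>
    obtain ⟨h0, h1⟩ := succ_iff.mp hF
    refine X_sub_C_pow_succ_dvd_of_derivative ?_ ?_
    · have hcomp : (Polynomial.aeval t).comp (aeval γ) = aeval fun i => (γ i).eval t :=
        MvPolynomial.algHom_ext fun i => by simp [Polynomial.coe_aeval_eq_eval]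
      have heval := DFunLike.congr_fun hcomp F
      rwa [AlgHom.comp_apply, Polynomial.coe_aeval_eq_eval, aeval_eq_eval, h0] at heval
    · rw [derivative_aeval]
      exact Finset.dvd_sum fun i _ => (ih (h1 i)).mul_right _

/-- The dehomogenization `F(x, y, z) ↦ F(x, 1, z)`, as a polynomial in `z` over `ℂ[x]`. -/
noncomputable def dehomogenize : MvPolynomial (Fin 3) ℂ →ₐ[ℂ] ℂ[X][X] :=
  aeval ![Polynomial.C Polynomial.X, 1, Polynomial.X]

lemma eval_dehomogenize (s : ℂ[X]) (F : MvPolynomial (Fin 3) ℂ) :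
    (dehomogenize F).eval s = aeval ![Polynomial.X, 1, s] F := by
  have hcomp : ((Polynomial.aeval s).restrictScalars ℂ).comp dehomogenize =
      aeval ![Polynomial.X, 1, s] :=
    MvPolynomial.algHom_ext fun i => by fin_cases i <;> simp [dehomogenize]
  simpa [Polynomial.coe_aeval_eq_eval] using DFunLike.congr_fun hcomp F

lemma iterate_derivative_dehomogenize (j : ℕ) (F : MvPolynomial (Fin 3) ℂ) :
    Polynomial.derivative^[j] (dehomogenize F) = dehomogenize ((pderiv 2)^[j] F) := by
  have hderiv : Function.Semiconj dehomogenize (pderiv 2) Polynomial.derivative := fun G => by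
    simp [dehomogenize, derivative_aeval, Fin.sum_univ_three]
  exact ((hderiv.iterate_right j) F).symm

lemma X_sub_C_pow_dvd_coeff_taylor_dehomogenize {s : ℂ[X]} {t : ℂ}
    (hF : VanishesToOrder ![t, 1, s.eval t] m F) (j : ℕ) :
    (Polynomial.X - Polynomial.C t) ^ (m - j) ∣
      (Polynomial.taylor s (dehomogenize F)).coeff j := by
  have hpoint : (fun i => (![Polynomial.X, 1, s] i : ℂ[X]).eval t) = ![t, 1, s.eval t] := by
    ext i
    fin_cases i <;> simp
  have hfactorial : IsUnit (j.factorial : ℂ[X]) := by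
    rw [← Polynomial.C_eq_natCast, Polynomial.isUnit_C, isUnit_iff_ne_zero]
    exact_mod_cast j.factorial_ne_zero
  have hdvd := (hpoint ▸ hF.iterate_pderiv 2 j : VanishesToOrder _ _ _).X_sub_C_pow_dvd_aeval
  rwa [← eval_dehomogenize, ← iterate_derivative_dehomogenize,
    ← Polynomial.factorial_smul_hasseDeriv, LinearMap.smul_apply, Polynomial.eval_smul,
    ← Polynomial.taylor_coeff, nsmul_eq_mul, hfactorial.dvd_mul_left] at hdvd

lemma coeff_coeff_dehomogenize (F : MvPolynomial (Fin 3) ℂ) (i j : ℕ) :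
    ((dehomogenize F).coeff j).coeff i =
      ∑ s ∈ F.support with s 0 = i ∧ s 2 = j, F.coeff s := by
  have hmonomial (s : Fin 3 →₀ ℕ) (a : ℂ) : ((dehomogenize (monomial s a)).coeff j).coeff i =
      if s 0 = i ∧ s 2 = j then a else 0 := by
    rw [dehomogenize, aeval_monomial, Finsupp.prod_fintype _ _ fun _ => pow_zero _,
      Fin.prod_univ_three, Polynomial.algebraMap_apply, Polynomial.algebraMap_eq]
    simp only [Matrix.cons_val_zero, Matrix.cons_val_one, Matrix.cons_val, one_pow, mul_one]
    rw [← mul_assoc, ← Polynomial.C_pow, ← Polynomial.C_mul, Polynomial.coeff_C_mul,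
      Polynomial.coeff_X_pow]
    by_cases h2 : s 2 = j
    · simp [Polynomial.coeff_X_pow, h2, eq_comm]
    · simp [h2, Ne.symm h2]
  conv_lhs => rw [F.as_sum]
  simp only [map_sum, Polynomial.finsetSum_coeff, hmonomial, Finset.sum_filter]

lemma degree_eq_of_coeff_ne_zero {σ R : Type*} [CommSemiring R] {F : MvPolynomial σ R} {d : ℕ}
    (hF : F.IsHomogeneous d) {s : σ →₀ ℕ} (hs : F.coeff s ≠ 0) : s.degree = d :=
  by_contra fun h => hs (hF.coeff_eq_zero h)

lemma degree_eq_add_add (s : Fin 3 →₀ ℕ) : s.degree = s 0 + s 1 + s 2 := by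
  rw [Finsupp.degree_eq_sum, Fin.sum_univ_three]

lemma coeff_coeff_dehomogenize_degree (hF : F.IsHomogeneous d) {s : Fin 3 →₀ ℕ}
    (hs : s.degree = d) : ((dehomogenize F).coeff (s 2)).coeff (s 0) = F.coeff s := by
  rw [coeff_coeff_dehomogenize, Finset.sum_eq_single s]
  · intro t ht hts
    rw [Finset.mem_filter, mem_support_iff] at ht
    have htd := degree_eq_of_coeff_ne_zero hF ht.1
    rw [degree_eq_add_add] at htd hs
    refine absurd (Finsupp.ext fun i => ?_) hts
    fin_cases i <;> simp <;> omega
  · simp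

lemma eq_zero_of_dehomogenize_eq_zero (hF : F.IsHomogeneous d) (h : dehomogenize F = 0) :
    F = 0 := by
  ext s
  by_cases hs : s.degree = d
  · rw [← coeff_coeff_dehomogenize_degree hF hs, h]
    simp
  · rw [hF.coeff_eq_zero hs, coeff_zero]

lemma exists_ne_and_ne_zero_of_ne_single {σ : Type*} {i : σ} {s : σ →₀ ℕ}
    (hs : s ≠ Finsupp.single i s.degree) : ∃ l, l ≠ i ∧ s l ≠ 0 := by
  contrapose! hs
  have hsingle : s = Finsupp.single i (s i) := Finsupp.support_subset_singleton.mp fun l hl => by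
    rw [Finset.mem_singleton]
    exact by_contra fun hli => Finsupp.mem_support_iff.mp hl (hs l hli)
  rw [hsingle, Finsupp.degree_single]

lemma eval_single_of_isHomogeneous {σ R : Type*} [DecidableEq σ] [CommSemiring R]
    {F : MvPolynomial σ R} {d : ℕ} (hF : F.IsHomogeneous d) (i : σ) :
    eval (Pi.single i 1) F = F.coeff (Finsupp.single i d) := by
  rw [eval_eq, Finset.sum_eq_single (Finsupp.single i d)]
  · rw [Finset.prod_eq_one, mul_one]
    intro l hl
    rw [Finset.mem_singleton.mp (Finsupp.support_single_subset hl), Pi.single_eq_same, one_pow]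
  · intro s hs hsi
    rw [← degree_eq_of_coeff_ne_zero hF (mem_support_iff.mp hs)] at hsi
    obtain ⟨l, hli, hl⟩ := exists_ne_and_ne_zero_of_ne_single hsi
    rw [Finset.prod_eq_zero (Finsupp.mem_support_iff.mpr hl), mul_zero]
    rw [Pi.single_eq_of_ne hli, zero_pow hl]
  · intro hi
    rw [notMem_support_iff.mp hi, zero_mul]

lemma VanishesToOrder.coeff_eq_zero {i : Fin 3} (hF : F.IsHomogeneous d)
    (h : VanishesToOrder (Pi.single i 1) m F) {s : Fin 3 →₀ ℕ} (hs : d < s i + m) :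
    F.coeff s = 0 := by
  induction m generalizing F d s with
  | zero => exact hF.coeff_eq_zero ((hs.trans_le (Finsupp.le_degree i s)).ne')
  | succ m ih =>
    obtain ⟨h0, h1⟩ := succ_iff.mp h
    by_contra hne
    obtain rfl := degree_eq_of_coeff_ne_zero hF hne
    have hsi : s ≠ Finsupp.single i s.degree := fun hsi => hne <| by
      rw [hsi, ← eval_single_of_isHomogeneous hF, h0]
    obtain ⟨l, hli, hl⟩ := exists_ne_and_ne_zero_of_ne_single hsi
    obtain ⟨t, rfl⟩ : ∃ t, s = t + Finsupp.single l 1 :=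
      ⟨_, (tsub_add_cancel_of_le
        (Finsupp.single_le_iff.mpr (Nat.one_le_iff_ne_zero.mpr hl))).symm⟩
    rw [map_add, Finsupp.degree_single] at hs hF
    rw [Finsupp.add_apply, Finsupp.single_eq_of_ne hli.symm] at hs
    have ht : (pderiv l F).coeff t = 0 := ih hF.pderiv (h1 l) (by omega)
    rw [coeff_pderiv] at ht
    exact (mul_ne_zero hne (Nat.cast_add_one_ne_zero _)) ht

end Dehomogenization

section UpperBound

/-- The points `(0, 0, 1)` and `(i, 1, i ^ e)` for `i = 0, …, n - 1`, all on the rational curve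
`z y ^ (e - 1) = x ^ e`. -/
noncomputable def rationalCurvePoints (e n : ℕ) : Fin (n + 1) → Fin 3 → ℂ :=
  Fin.cons (Pi.single 2 1) fun i : Fin n => ![(i : ℂ), 1, (i : ℂ) ^ e]

lemma dehomogenize_mem_affineSystem {e n d m₀ m k : ℕ} {F : MvPolynomial (Fin 3) ℂ}
    (hd : m₀ + k = d) (hF : F ∈ linSys (rationalCurvePoints e n) d (quasiHom n m₀ m)) :
    dehomogenize F ∈
      affineSystem e d (k + 1) m (∏ i : Fin n, (Polynomial.X - Polynomial.C (i : ℂ))) := by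
  obtain ⟨hhom, hv⟩ := mem_linSys.mp hF
  have hcoeff (i j : ℕ) (h : ∀ s, F.coeff s ≠ 0 → ¬ (s 0 = i ∧ s 2 = j)) :
      ((dehomogenize F).coeff j).coeff i = 0 := by
    rw [coeff_coeff_dehomogenize]
    refine Finset.sum_eq_zero fun s hs => ?_
    rw [Finset.mem_filter, mem_support_iff] at hs
    exact absurd hs.2 (h s hs.1)
  refine ⟨fun j hj => ?_, fun j i hij => hcoeff i j fun s hs h => ?_, fun j => ?_⟩
  · ext i
    exact hcoeff i j fun s hs h => hs ((hv 0).coeff_eq_zero hhom (by rw [quasiHom_zero]; omega))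
  · have := degree_eq_add_add s
    have := degree_eq_of_coeff_ne_zero hhom hs
    omega
  · rw [← Finset.prod_pow]
    refine Finset.prod_dvd_of_coprime (fun a _ b _ hab => ?_) fun i _ => ?_
    · refine IsCoprime.pow (Polynomial.isCoprime_X_sub_C_of_isUnit_sub ?_)
      rw [isUnit_iff_ne_zero, sub_ne_zero]
      exact_mod_cast fun h => hab (Fin.ext h)
    · refine X_sub_C_pow_dvd_coeff_taylor_dehomogenize ?_ j
      simpa [rationalCurvePoints] using hv i.succ

variable {e a k c d m₀ : ℕ}

theorem projDim_rationalCurvePoints_le (he : 1 ≤ e) (hc : c ≤ k) (hd : d = (k + 2 * a) * e + c)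
    (hm₀ : m₀ + k = d) :
    projDim (rationalCurvePoints e (2 * e)) d (quasiHom (2 * e) m₀ (k + a)) ≤
      (c + 2).choose 2 - 1 := by
  set W := linSys (rationalCurvePoints e (2 * e)) d (quasiHom (2 * e) m₀ (k + a))
  set H : Polynomial ℂ := ∏ i : Fin (2 * e), (Polynomial.X - Polynomial.C (i : ℂ)) with hH
  have hH0 : H ≠ 0 := Finset.prod_ne_zero_iff.mpr fun i _ => Polynomial.X_sub_C_ne_zero _
  have hdeg : H.natDegree = 2 * e := by
    rw [hH, Polynomial.natDegree_prod _ _ fun i _ => Polynomial.X_sub_C_ne_zero _]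
    simp only [Polynomial.natDegree_X_sub_C, Finset.sum_const, Finset.card_fin, smul_eq_mul,
      mul_one]
  let f : W →ₗ[ℂ] affineSystem e d (k + 1) (k + a) H :=
    dehomogenize.toLinearMap.restrict fun F hF => dehomogenize_mem_affineSystem hm₀ hF
  have hf : Function.Injective f := (injective_iff_map_eq_zero f).mpr fun F hF =>
    Subtype.ext (eq_zero_of_dehomogenize_eq_zero (mem_linSys.mp F.2).1 (congrArg Subtype.val hF))
  have hrank : Module.finrank ℂ W ≤ (c + 2).choose 2 := Module.finrank_le_of_rank_le
    ((LinearMap.rank_le_of_injective f hf).trans (rank_affineSystem_le_choose he hc hd hH0 hdeg))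
  exact sub_le_sub_right (Nat.cast_le.mpr hrank) 1

theorem generically_projDim_eq (he : 1 ≤ e) (hc : c ≤ k) (hd : d = (k + 2 * a) * e + c)
    (hm₀ : m₀ + k = d) :
    Generically (2 * e + 1) fun p =>
      projDim p d (quasiHom (2 * e) m₀ (k + a)) = (c + 2).choose 2 - 1 :=
  (generically_projDim_le (rationalCurvePoints e (2 * e)) d _).mono fun _ hp hle =>
    (hle.trans (projDim_rationalCurvePoints_le he hc hd hm₀)).antisymm
      (choose_sub_one_le_projDim_quasiHom he hc hd hm₀ hp)

end UpperBound

theorem special_L_8e_families_general {e a k c d m₀ : ℕ} (he : 1 ≤ e) (hc : c ≤ k)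
    (hd : d = (k + 2 * a) * e + c) (hm₀ : m₀ + k = d) (hs : 2 ≤ a ∨ c + 2 ≤ k) :
    virtDim d (quasiHom (2 * e) m₀ (k + a)) =
        (c + 2).choose 2 - 1 - (k - c).choose 2 - 2 * e * a.choose 2 ∧
      Generically (2 * e + 1) fun p =>
        projDim p d (quasiHom (2 * e) m₀ (k + a)) = (c + 2).choose 2 - 1 ∧
        projDim p d (quasiHom (2 * e) m₀ (k + a)) >
          max (-1) (virtDim d (quasiHom (2 * e) m₀ (k + a))) := by
  have hv := virtDim_quasiHom_two_mul hc hd hm₀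
  refine ⟨hv, (generically_projDim_eq he hc hd hm₀).mono fun p _ hp => ⟨hp, ?_⟩⟩
  have hpos : 0 < (c + 2).choose 2 := Nat.choose_pos (by omega)
  have hspecial : 0 < (k - c).choose 2 + 2 * e * a.choose 2 := by
    rcases hs with ha | hk
    · exact Nat.add_pos_right _ (Nat.mul_pos (by omega) (Nat.choose_pos ha))
    · exact Nat.add_pos_left (Nat.choose_pos (by omega)) _
  rw [hp, hv]
  zify at hpos hspecial
  refine max_lt ?_ ?_ <;> linarith

theorem special_L_8e_families (e : ℕ) (he : 1 ≤ e) :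
    virtDim (8 * e) (qh (2 * e) (8 * e - 4)) = -2 * (e : ℤ) - 6 ∧
    virtDim (8 * e + 1) (qh (2 * e) (8 * e - 3)) = -2 * (e : ℤ) - 1 ∧
    virtDim (8 * e + 2) (qh (2 * e) (8 * e - 2)) = -2 * (e : ℤ) + 4 ∧
    Generically (2 * e + 1) (fun p =>
      (projDim p (8 * e) (qh (2 * e) (8 * e - 4)) = 0 ∧
        projDim p (8 * e) (qh (2 * e) (8 * e - 4)) >
          max (-1) (virtDim (8 * e) (qh (2 * e) (8 * e - 4)))) ∧
      (projDim p (8 * e + 1) (qh (2 * e) (8 * e - 3)) = 2 ∧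
        projDim p (8 * e + 1) (qh (2 * e) (8 * e - 3)) >
          max (-1) (virtDim (8 * e + 1) (qh (2 * e) (8 * e - 3)))) ∧
      (projDim p (8 * e + 2) (qh (2 * e) (8 * e - 2)) = 5 ∧
        projDim p (8 * e + 2) (qh (2 * e) (8 * e - 2)) >
          max (-1) (virtDim (8 * e + 2) (qh (2 * e) (8 * e - 2))))) := by
  obtain ⟨hv₀, hg₀⟩ := special_L_8e_families_general (k := 4) (a := 2) (c := 0) (d := 8 * e)
    (m₀ := 8 * e - 4) he (by omega) (by ring) (by omega) (.inl le_rfl)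
  obtain ⟨hv₁, hg₁⟩ := special_L_8e_families_general (k := 4) (a := 2) (c := 1) (d := 8 * e + 1)
    (m₀ := 8 * e - 3) he (by omega) (by ring) (by omega) (.inl le_rfl)
  obtain ⟨hv₂, hg₂⟩ := special_L_8e_families_general (k := 4) (a := 2) (c := 2) (d := 8 * e + 2)
    (m₀ := 8 * e - 2) he (by omega) (by ring) (by omega) (.inl le_rfl)
  simp only [qh_eq_quasiHom]
  refine ⟨hv₀.trans ?_, hv₁.trans ?_, hv₂.trans ?_, hg₀.and (hg₁.and hg₂)⟩ <;>
    norm_num [Nat.choose] <;> ring
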